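/- For the Weierstrass ℘-function with period lattice L_ω = ω·ℤ[τ] satisfying ℘′(z)² = 4℘(z)³ − 1, one has ℘′(ω/6, L_ω) = −√3·(3 + 2·∛2 + 2·∛4). -/

import Mathlib

noncomputable section

open Complex Real ComplexConjugate

/-- `τ = (−1+√−3)/2`, a primitive cube root of unity. -/
def tau : ℂ := (-1 + Real.sqrt 3 * Complex.I) / 2

/-- `√−3 = 1 + 2τ`, the square root of `−3` with positive imaginary part. -/
def sqrtm3 : ℂ := Real.sqrt 3 * Complex.I

/-- The ring of integers `O_K = ℤ[τ]` of `K = ℚ(√−3)`, as a subring of `ℂ`. -/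
def Eis : Subring ℂ := Subring.closure {tau}

/-- `τ` as an element of `ℤ[τ]`. -/
def tauO : Eis := ⟨tau, Subring.subset_closure rfl⟩

/-- `√−3` as an element of `ℤ[τ]`. -/
def sqrtm3O : Eis := 1 + 2 * tauO

/-- Membership in the lattice `L_ω = ω·ℤ[τ]`. -/
def inLattice (ω : ℝ) (z : ℂ) : Prop := ∃ a : Eis, z = (ω : ℂ) * a

/-- The Weierstrass `℘`-function of the lattice `L_ω = ω·ℤ[τ]`. -/
def wp (ω : ℝ) (z : ℂ) : ℂ :=
  1 / z ^ 2 + ∑' a : {w : ℂ // inLattice ω w ∧ w ≠ 0},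
    (1 / (z - (a : ℂ)) ^ 2 - 1 / (a : ℂ) ^ 2)

/-- The Weierstrass `ζ`-function of the lattice `L_ω = ω·ℤ[τ]`. -/
def wzeta (ω : ℝ) (z : ℂ) : ℂ :=
  1 / z + ∑' a : {w : ℂ // inLattice ω w ∧ w ≠ 0},
    (1 / (z - (a : ℂ)) + 1 / (a : ℂ) + z / (a : ℂ) ^ 2)

/-- The real cube root of 2, as a complex number. -/
def cbrt2 : ℂ := ((2 : ℝ) ^ ((1 : ℝ) / 3) : ℝ)

/-- The real cube root of 4, as a complex number. -/
def cbrt4 : ℂ := ((4 : ℝ) ^ ((1 : ℝ) / 3) : ℝ)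

/-
Write `(g₂, g₃)` for the invariants of the hexagonal lattice. Multiplication by `τ` preserves the
lattice, so `g₂ = 0`, that is `℘'² = 4℘³ - g₃`. If `f` and `g` have poles of order `n` exactly at
the lattice points and zeros of order `n` at `u` and `-u`, then `f (z + u) * g z` is an elliptic
function without poles, hence constant by Liouville. This is applied twice.
* `u = ω(τ-1)/3` is fixed by `τ` modulo the lattice, so `℘ u = 0` and `℘' ∓ ℘' u` has a triple zero
  at `±u`. Since `ω/3 + u = τω/3`, the resulting constant gives `℘'(ω/3)² = 3g₃`, `℘(ω/3)³ = g₃`.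
* At the half period `ω/2` the function `℘ - e`, `e = ℘(ω/2)`, has a double zero. Evaluating at
  `τω/2` gives `(℘(z + ω/2) - e)(℘ z - e) = 3e²`, and `z = ω/6` determines `℘(ω/6)`, hence
  `℘'(ω/6)²`.
The sign comes from the real variable: `℘'` has no zero on `(0, ω/2)` and `℘(ω/3) < ℘(ω/6)`.
-/

open Filter Topology
open scoped PeriodPair

section MeromorphicOrder

lemma meromorphicOrderAt_add_of_periodic {f : ℂ → ℂ} {c : ℂ} (hf : f.Periodic c) (z : ℂ) :
    meromorphicOrderAt f (z + c) = meromorphicOrderAt f z := by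
  rw [← meromorphicOrderAt_comp_add_const_eq_meromorphicOrderAt,
    show f ∘ (· + c) = f from funext hf]

lemma natCast_le_meromorphicOrderAt_of_le_analyticOrderAt {f : ℂ → ℂ} {z : ℂ} {n : ℕ}
    (hf : AnalyticAt ℂ f z) (hn : n ≤ analyticOrderAt f z) :
    ((n : ℤ) : WithTop ℤ) ≤ meromorphicOrderAt f z := by
  rw [hf.meromorphicOrderAt_eq]
  exact ENat.monotone_map_iff.mpr Nat.mono_cast hn

lemma two_le_meromorphicOrderAt_sub_of_deriv_eq_zero {f : ℂ → ℂ} {z : ℂ}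
    (hf : AnalyticAt ℂ f z) (hderiv : deriv f z = 0) :
    ((2 : ℕ) : ℤ) ≤ meromorphicOrderAt (fun w ↦ f w - f z) z := by
  have hsub : AnalyticAt ℂ (fun w ↦ f w - f z) z := by fun_prop
  refine natCast_le_meromorphicOrderAt_of_le_analyticOrderAt hsub ?_
  rw [natCast_le_analyticOrderAt_iff_iteratedDeriv_eq_zero hsub]
  intro i hi
  interval_cases i
  · simp
  · simp [hderiv]

lemma natCast_le_meromorphicOrderAt_of_mul_eq_pow {p q r : ℂ → ℂ} {z : ℂ} {n : ℕ}
    (hq : AnalyticAt ℂ q z) (hq0 : q z ≠ 0) (hr : AnalyticAt ℂ r z) (hr0 : r z = 0)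
    (h : q * p =ᶠ[𝓝 z] r ^ n) :
    ((n : ℤ) : WithTop ℤ) ≤ meromorphicOrderAt p z := by
  rw [← meromorphicOrderAt_mul_of_ne_zero hq hq0,
    meromorphicOrderAt_congr (h.filter_mono nhdsWithin_le_nhds)]
  refine natCast_le_meromorphicOrderAt_of_le_analyticOrderAt (hr.pow n) ?_
  rw [analyticOrderAt_pow hr, nsmul_eq_mul]
  exact le_mul_of_one_le_right' <|
    Order.one_le_iff_ne_zero.mpr (hr.analyticOrderAt_ne_zero.mpr hr0)

lemma exists_differentiable_eventuallyEq_nhdsNE {f : ℂ → ℂ} (hf : Meromorphic f)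
    (hord : ∀ z, 0 ≤ meromorphicOrderAt f z) :
    ∃ g : ℂ → ℂ, Differentiable ℂ g ∧ ∀ z, f =ᶠ[𝓝[≠] z] g := by
  have hon : MeromorphicOn f Set.univ := fun z _ ↦ hf z
  have heq (z : ℂ) : f =ᶠ[𝓝[≠] z] toMeromorphicNFOn f Set.univ :=
    (hon.toMeromorphicNFOn_eq_self_on_nhdsNE (Set.mem_univ z)).symm
  refine ⟨toMeromorphicNFOn f Set.univ, fun z ↦ AnalyticAt.differentiableAt ?_, heq⟩
  rw [← (meromorphicNFOn_toMeromorphicNFOn f Set.univ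
    (Set.mem_univ z)).meromorphicOrderAt_nonneg_iff_analyticAt, ← meromorphicOrderAt_congr (heq z)]
  exact hord z

end MeromorphicOrder

lemma hasDerivAt_neg_of_forall_ne_zero {f f' : ℝ → ℝ} {s : Set ℝ} (hs : Convex ℝ s)
    (hf : ∀ t ∈ s, HasDerivAt f (f' t) t) (hne : ∀ t ∈ s, f' t ≠ 0) {x y : ℝ} (hx : x ∈ s)
    (hy : y ∈ s) (hxy : x < y) (hlt : f y < f x) : f' x < 0 := by
  have hwithin (t : ℝ) (ht : t ∈ s) : HasDerivWithinAt f (f' t) s t := (hf t ht).hasDerivWithinAt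
  rcases hasDerivWithinAt_forall_lt_or_forall_gt_of_forall_ne hs hwithin hne with hneg | hpos
  · exact hneg x hx
  · have hmono : StrictMonoOn f s := strictMonoOn_of_hasDerivWithinAt_pos hs
      (fun t ht ↦ (hwithin t ht).continuousWithinAt)
      (fun t ht ↦ (hwithin t (interior_subset ht)).mono interior_subset)
      fun t ht ↦ hpos t (interior_subset ht)
    exact absurd (hmono hx hy hxy) hlt.not_gt

section EllipticFunctions

variable {L : PeriodPair}

lemma exists_eventuallyEq_const_of_periodic {f : ℂ → ℂ} (hf : Meromorphic f)
    (hper : ∀ l ∈ L.lattice, f.Periodic l) (hord : ∀ z, 0 ≤ meromorphicOrderAt f z) :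
    ∃ C : ℂ, ∀ z, f =ᶠ[𝓝[≠] z] fun _ ↦ C := by
  obtain ⟨g, hg, hfg⟩ := exists_differentiable_eventuallyEq_nhdsNE hf hord
  have hgper (z l : ℂ) (hl : l ∈ L.lattice) : g (z + l) = g z := by
    have hshift : Tendsto (· + l) (𝓝[≠] z) (𝓝[≠] (z + l)) :=
      tendsto_nhdsWithin_iff.mpr ⟨(continuous_add_const l).continuousAt.mono_left
        nhdsWithin_le_nhds, eventually_nhdsWithin_of_forall fun w hw ↦ by simpa using hw⟩
    have hne : (fun w ↦ g (w + l)) =ᶠ[𝓝[≠] z] g := by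
      filter_upwards [hshift.eventually (hfg (z + l)), hfg z] with w hw hw'
      rw [← hw, ← hw', hper l hl w]
    have hcont := hg.continuous
    exact ((ContinuousAt.eventuallyEq_nhds_iff_eventuallyEq_nhdsNE (by fun_prop)
      (by fun_prop)).mp hne).eq_of_nhds
  refine ⟨g 0, fun z ↦ (hfg z).trans (.of_forall fun w ↦ ?_)⟩
  exact hg.apply_eq_apply_of_bounded
    (IsZLattice.isCompact_range_of_periodic L.lattice g hg.continuous hgper).isBounded w 0

/-- `f` is an elliptic function for the lattice of `L`, holomorphic off the lattice, with poles of
exact order `n` at the lattice points (no condition is put on the junk values there). The exact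
order, rather than a bound, ensures that `f` is not identically zero. -/
structure IsEllipticOfPoleOrder (L : PeriodPair) (n : ℕ) (f : ℂ → ℂ) : Prop where
  periodic : ∀ l ∈ L.lattice, f.Periodic l
  analyticAt : ∀ z ∉ L.lattice, AnalyticAt ℂ f z
  meromorphicAt_zero : MeromorphicAt f 0
  meromorphicOrderAt_zero : meromorphicOrderAt f 0 = ((-n : ℤ) : WithTop ℤ)

namespace IsEllipticOfPoleOrder

variable {n : ℕ} {f g : ℂ → ℂ}

lemma meromorphic (hf : IsEllipticOfPoleOrder L n f) : Meromorphic f := by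
  intro z
  by_cases hz : z ∈ L.lattice
  · rw [← zero_add z, ← meromorphicAt_comp_add_const_iff_meromorphicAt,
      show f ∘ (· + z) = f from funext (hf.periodic z hz)]
    exact hf.meromorphicAt_zero
  · exact (hf.analyticAt z hz).meromorphicAt

lemma meromorphicOrderAt_of_mem (hf : IsEllipticOfPoleOrder L n f) {l : ℂ} (hl : l ∈ L.lattice) :
    meromorphicOrderAt f l = ((-n : ℤ) : WithTop ℤ) := by
  rw [← zero_add l, meromorphicOrderAt_add_of_periodic (hf.periodic l hl),
    hf.meromorphicOrderAt_zero]

lemma meromorphicOrderAt_ne_top (hf : IsEllipticOfPoleOrder L n f) (z : ℂ) :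
    meromorphicOrderAt f z ≠ ⊤ :=
  MeromorphicOn.meromorphicOrderAt_ne_top_of_isPreconnected (fun w _ ↦ hf.meromorphic w)
    isPreconnected_univ (Set.mem_univ 0) (Set.mem_univ z)
    (by simp [hf.meromorphicOrderAt_zero])

lemma sub_const (hf : IsEllipticOfPoleOrder L n f) (hn : n ≠ 0) (c : ℂ) :
    IsEllipticOfPoleOrder L n (fun z ↦ f z - c) where
  periodic l hl z := congrArg (· - c) (hf.periodic l hl z)
  analyticAt z hz := (hf.analyticAt z hz).sub analyticAt_const
  meromorphicAt_zero := hf.meromorphicAt_zero.sub (.const c 0)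
  meromorphicOrderAt_zero := by
    have hlt : meromorphicOrderAt f 0 < meromorphicOrderAt (fun _ : ℂ ↦ -c) (0 : ℂ) := by
      refine lt_of_lt_of_le ?_ (analyticAt_const (v := -c)).meromorphicOrderAt_nonneg
      rw [hf.meromorphicOrderAt_zero]
      exact_mod_cast neg_neg_of_pos (Int.natCast_pos.mpr hn.bot_lt)
    simp only [sub_eq_add_neg]
    exact (meromorphicOrderAt_add_eq_left_of_lt (.const (-c) 0) hlt).trans
      hf.meromorphicOrderAt_zero

theorem exists_translate_mul_eq (hf : IsEllipticOfPoleOrder L n f)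
    (hg : IsEllipticOfPoleOrder L n g) {u : ℂ}
    (hfu : ((n : ℤ) : WithTop ℤ) ≤ meromorphicOrderAt f u)
    (hgu : ((n : ℤ) : WithTop ℤ) ≤ meromorphicOrderAt g (-u)) :
    ∃ C ≠ 0, ∀ z ∉ L.lattice, z + u ∉ L.lattice → f (z + u) * g z = C := by
  have hfs : Meromorphic (fun z ↦ f (z + u)) := fun z ↦
    meromorphicAt_comp_add_const_iff_meromorphicAt.mpr (hf.meromorphic (z + u))
  have hord (z : ℂ) : meromorphicOrderAt ((fun z ↦ f (z + u)) * g) z =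
      meromorphicOrderAt f (z + u) + meromorphicOrderAt g z := by
    rw [meromorphicOrderAt_mul (hfs z) (hg.meromorphic z)]
    exact congrArg (· + _) meromorphicOrderAt_comp_add_const_eq_meromorphicOrderAt
  have hnonneg (z : ℂ) : 0 ≤ meromorphicOrderAt ((fun z ↦ f (z + u)) * g) z := by
    have hcancel : ((n : ℤ) : WithTop ℤ) + ((-n : ℤ) : WithTop ℤ) = 0 := by
      exact_mod_cast add_neg_cancel (n : ℤ)
    rw [hord]
    by_cases hz : z ∈ L.lattice
    · rw [add_comm z, meromorphicOrderAt_add_of_periodic (hf.periodic z hz),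
        hg.meromorphicOrderAt_of_mem hz, ← hcancel]
      gcongr
    · by_cases hzu : z + u ∈ L.lattice
      · rw [show z = -u + (z + u) by ring, meromorphicOrderAt_add_of_periodic (hg.periodic _ hzu),
          show -u + (z + u) + u = z + u by ring, hf.meromorphicOrderAt_of_mem hzu, add_comm,
          ← hcancel]
        gcongr
      · exact add_nonneg (hf.analyticAt _ hzu).meromorphicOrderAt_nonneg
          (hg.analyticAt _ hz).meromorphicOrderAt_nonneg
  obtain ⟨C, hC⟩ := exists_eventuallyEq_const_of_periodic (L := L)
    (hfs.mul hg.meromorphic)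
    (fun l hl z ↦ by simp [add_right_comm z l u, hf.periodic l hl _, hg.periodic l hl z]) hnonneg
  refine ⟨C, ?_, fun z hz hzu ↦ ?_⟩
  · rintro rfl
    have htop := meromorphicOrderAt_eq_top_iff.mpr (hC 0)
    rw [hord, WithTop.add_eq_top] at htop
    exact htop.elim (hf.meromorphicOrderAt_ne_top _) (hg.meromorphicOrderAt_ne_top _)
  · have hshift : AnalyticAt ℂ (fun z ↦ f (z + u)) z :=
      AnalyticAt.fun_comp (g := f) (hf.analyticAt _ hzu) (by fun_prop)
    have han := hshift.mul (hg.analyticAt z hz)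
    exact ((han.continuousAt.eventuallyEq_nhds_iff_eventuallyEq_nhdsNE
      continuousAt_const).mp (hC z)).eq_of_nhds

end IsEllipticOfPoleOrder

end EllipticFunctions

section WeierstrassP

variable (L : PeriodPair)

lemma isEllipticOfPoleOrder_weierstrassP : IsEllipticOfPoleOrder L 2 ℘[L] where
  periodic l hl := L.periodic_weierstrassP ⟨l, hl⟩
  analyticAt z hz := L.analyticOnNhd_weierstrassP z hz
  meromorphicAt_zero := L.meromorphic_weierstrassP 0
  meromorphicOrderAt_zero := L.order_weierstrassP 0 (zero_mem _)

lemma isEllipticOfPoleOrder_derivWeierstrassP : IsEllipticOfPoleOrder L 3 ℘'[L] where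
  periodic l hl := L.periodic_derivWeierstrassP ⟨l, hl⟩
  analyticAt z hz := L.analyticOnNhd_derivWeierstrassP z hz
  meromorphicAt_zero := L.meromorphic_derivWeierstrassP 0
  meromorphicOrderAt_zero := by
    rw [← L.deriv_weierstrassP]
    exact meromorphicOrderAt_deriv_eq_sub_one (n := -2) (by norm_num)
      (L.order_weierstrassP 0 (zero_mem _))

variable {L} {u z : ℂ}

lemma derivWeierstrassP_eq_zero_of_two_mul_mem (h2u : 2 * u ∈ L.lattice) : ℘'[L] u = 0 := by
  have h : ℘'[L] u = -℘'[L] u := by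
    calc ℘'[L] u = ℘'[L] (-u + 2 * u) := by ring_nf
      _ = -℘'[L] u := by rw [L.periodic_derivWeierstrassP ⟨_, h2u⟩, L.derivWeierstrassP_neg]
  exact self_eq_neg.mp h

theorem exists_weierstrassP_translate_mul_eq (hu : u ∉ L.lattice) (h2u : 2 * u ∈ L.lattice) :
    ∃ C ≠ 0, ∀ z ∉ L.lattice, z + u ∉ L.lattice →
      (℘[L] (z + u) - ℘[L] u) * (℘[L] z - ℘[L] u) = C := by
  have hell := (isEllipticOfPoleOrder_weierstrassP L).sub_const two_ne_zero (℘[L] u)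
  have hord : ((2 : ℕ) : ℤ) ≤ meromorphicOrderAt (fun z ↦ ℘[L] z - ℘[L] u) u := by
    refine two_le_meromorphicOrderAt_sub_of_deriv_eq_zero (L.analyticOnNhd_weierstrassP u hu) ?_
    rw [L.deriv_weierstrassP, derivWeierstrassP_eq_zero_of_two_mul_mem h2u]
  refine hell.exists_translate_mul_eq hell hord ?_
  rwa [← meromorphicOrderAt_add_of_periodic (hell.periodic _ h2u), show -u + 2 * u = u by ring]

lemma weierstrassP_ne_of_two_mul_mem (hu : u ∉ L.lattice) (h2u : 2 * u ∈ L.lattice)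
    (hz : z ∉ L.lattice) (hzu : z + u ∉ L.lattice) : ℘[L] z ≠ ℘[L] u := by
  obtain ⟨C, hC, h⟩ := exists_weierstrassP_translate_mul_eq hu h2u
  rw [← h z hz hzu] at hC
  exact sub_ne_zero.mp (right_ne_zero_of_mul hC)

lemma four_mul_weierstrassP_pow_three_of_two_mul_mem (hg₂ : L.g₂ = 0) (hu : u ∉ L.lattice)
    (h2u : 2 * u ∈ L.lattice) : 4 * ℘[L] u ^ 3 = L.g₃ := by
  have h := L.derivWeierstrassP_sq u hu
  rw [derivWeierstrassP_eq_zero_of_two_mul_mem h2u, hg₂] at h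
  linear_combination -h

lemma g₃_ne_zero_of_g₂_eq_zero (hg₂ : L.g₂ = 0) : L.g₃ ≠ 0 := by
  intro hg₃
  have hzero {u : ℂ} (hu : u ∉ L.lattice) (h2u : 2 * u ∈ L.lattice) : ℘[L] u = 0 := by
    simpa [hg₃] using four_mul_weierstrassP_pow_three_of_two_mul_mem hg₂ hu h2u
  have h₁ : 2 * (L.ω₁ / 2) ∈ L.lattice := by
    simpa [mul_div_cancel₀] using L.ω₁_mem_lattice
  have h₂ : 2 * (L.ω₂ / 2) ∈ L.lattice := by
    simpa [mul_div_cancel₀] using L.ω₂_mem_lattice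
  have hsum : L.ω₁ / 2 + L.ω₂ / 2 ∉ L.lattice := by
    have h := (PeriodPair.mul_ω₁_add_mul_ω₂_mem_lattice (L := L) (α := 1 / 2) (β := 1 / 2)).not.mpr
      (by norm_num)
    convert h using 2
    push_cast
    ring
  exact weierstrassP_ne_of_two_mul_mem L.ω₂_div_two_notMem_lattice h₂ L.ω₁_div_two_notMem_lattice
    hsum ((hzero L.ω₁_div_two_notMem_lattice h₁).trans (hzero L.ω₂_div_two_notMem_lattice h₂).symm)

lemma derivWeierstrassP_sq_of_weierstrassP_eq_zero (hu : u ∉ L.lattice) (h0 : ℘[L] u = 0) :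
    ℘'[L] u ^ 2 = -L.g₃ := by
  simp [L.derivWeierstrassP_sq u hu, h0]

lemma derivWeierstrassP_ne_zero_of_weierstrassP_eq_zero (hg₂ : L.g₂ = 0) (hu : u ∉ L.lattice)
    (h0 : ℘[L] u = 0) : ℘'[L] u ≠ 0 := by
  intro h
  have hsq := derivWeierstrassP_sq_of_weierstrassP_eq_zero hu h0
  rw [h, zero_pow two_ne_zero, zero_eq_neg] at hsq
  exact g₃_ne_zero_of_g₂_eq_zero hg₂ hsq

lemma three_le_meromorphicOrderAt_derivWeierstrassP_sub (hg₂ : L.g₂ = 0) (hu : u ∉ L.lattice)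
    (h0 : ℘[L] u = 0) :
    ((3 : ℕ) : ℤ) ≤ meromorphicOrderAt (fun z ↦ ℘'[L] z - ℘'[L] u) u := by
  have hc := derivWeierstrassP_ne_zero_of_weierstrassP_eq_zero hg₂ hu h0
  have hP' := L.analyticOnNhd_derivWeierstrassP u hu
  have hfactor : (fun z ↦ (℘'[L] z + ℘'[L] u) / 4) * (fun z ↦ ℘'[L] z - ℘'[L] u)
      =ᶠ[𝓝 u] ℘[L] ^ 3 := by
    filter_upwards [L.isClosed_lattice.isOpen_compl.mem_nhds hu] with z hz
    have hz := L.derivWeierstrassP_sq z hz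
    simp only [Pi.mul_apply, Pi.pow_apply]
    linear_combination (hz - derivWeierstrassP_sq_of_weierstrassP_eq_zero hu h0 - ℘[L] z * hg₂) / 4
  exact natCast_le_meromorphicOrderAt_of_mul_eq_pow (q := fun z ↦ (℘'[L] z + ℘'[L] u) / 4)
    (by fun_prop) (by simpa using hc) (L.analyticOnNhd_weierstrassP u hu) h0 hfactor

theorem derivWeierstrassP_translate_mul_eq (hg₂ : L.g₂ = 0) (hu : u ∉ L.lattice)
    (h3u : 3 * u ∈ L.lattice) (h0 : ℘[L] u = 0) (hz : z ∉ L.lattice) (hzu : z + u ∉ L.lattice) :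
    (℘'[L] (z + u) - ℘'[L] u) * (℘'[L] z + ℘'[L] u) = 4 * L.g₃ := by
  have hell := isEllipticOfPoleOrder_derivWeierstrassP L
  have hneg := three_le_meromorphicOrderAt_derivWeierstrassP_sub hg₂ (neg_mem_iff.not.mpr hu)
    ((L.weierstrassP_neg u).trans h0)
  obtain ⟨C, -, hC⟩ := (hell.sub_const three_ne_zero (℘'[L] u)).exists_translate_mul_eq
    (hell.sub_const three_ne_zero (℘'[L] (-u)))
    (three_le_meromorphicOrderAt_derivWeierstrassP_sub hg₂ hu h0) hneg
  simp only [L.derivWeierstrassP_neg, sub_neg_eq_add] at hC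
  have h2u : u + u ∉ L.lattice := fun h ↦ hu <| by
    simpa only [show 3 * u - (u + u) = u by ring] using sub_mem h3u h
  have hdouble : ℘'[L] (u + u) = -℘'[L] u := by
    rw [show u + u = -u + 3 * u by ring, L.periodic_derivWeierstrassP ⟨_, h3u⟩,
      L.derivWeierstrassP_neg]
  have hCu := hC u hu h2u
  rw [hdouble] at hCu
  rw [hC z hz hzu, ← hCu]
  linear_combination -4 * derivWeierstrassP_sq_of_weierstrassP_eq_zero hu h0

end WeierstrassP

section LatticeSymmetry

variable {L : PeriodPair}

section Mul

variable {a : ℂ} (ha : a ≠ 0) (hL : ∀ l, a * l ∈ L.lattice ↔ l ∈ L.lattice)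
include ha hL

lemma tsum_lattice_mul (f : ℂ → ℂ) : ∑' l : L.lattice, f (a * l) = ∑' l : L.lattice, f l :=
  ((Equiv.mulLeft₀ a ha).subtypeEquiv fun l ↦ (hL l).symm).tsum_eq fun l : L.lattice ↦ f l

lemma weierstrassP_mul (z : ℂ) : ℘[L] (a * z) = (a ^ 2)⁻¹ * ℘[L] z := by
  rw [PeriodPair.weierstrassP, ← tsum_lattice_mul ha hL fun l ↦ 1 / (a * z - l) ^ 2 - 1 / l ^ 2,
    PeriodPair.weierstrassP, ← tsum_mul_left]
  refine tsum_congr fun l ↦ ?_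
  rw [← mul_sub, mul_pow, mul_pow]
  simp only [one_div, mul_inv, mul_sub]

lemma derivWeierstrassP_mul (z : ℂ) : ℘'[L] (a * z) = (a ^ 3)⁻¹ * ℘'[L] z := by
  rw [PeriodPair.derivWeierstrassP, ← tsum_lattice_mul ha hL fun l ↦ 2 / (a * z - l) ^ 3,
    PeriodPair.derivWeierstrassP, mul_neg, ← tsum_mul_left]
  congr 1
  refine tsum_congr fun l ↦ ?_
  rw [← mul_sub, mul_pow, div_mul_eq_div_div_swap, div_eq_inv_mul _ (a ^ 3)]

lemma G_eq_inv_pow_mul_G (n : ℕ) : L.G n = (a ^ n)⁻¹ * L.G n := by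
  conv_lhs => rw [PeriodPair.G, ← tsum_lattice_mul ha hL fun l ↦ (l ^ n)⁻¹]
  simp only [PeriodPair.G, mul_pow, mul_inv, tsum_mul_left]

end Mul

section Conj

variable (hL : ∀ l, conj l ∈ L.lattice ↔ l ∈ L.lattice)
include hL

lemma tsum_lattice_conj (f : ℂ → ℂ) : ∑' l : L.lattice, f (conj (l : ℂ)) = ∑' l : L.lattice, f l :=
  ((Function.Involutive.toPerm (conj : ℂ → ℂ) conj_conj).subtypeEquiv
    fun l ↦ (hL l).symm).tsum_eq fun l : L.lattice ↦ f l

lemma weierstrassP_conj (z : ℂ) : ℘[L] (conj z) = conj (℘[L] z) := by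
  rw [PeriodPair.weierstrassP, ← tsum_lattice_conj hL fun l ↦ 1 / (conj z - l) ^ 2 - 1 / l ^ 2,
    PeriodPair.weierstrassP, conj_tsum]
  simp only [map_sub, map_div₀, map_pow, map_one]

lemma derivWeierstrassP_conj (z : ℂ) : ℘'[L] (conj z) = conj (℘'[L] z) := by
  rw [PeriodPair.derivWeierstrassP, ← tsum_lattice_conj hL fun l ↦ 2 / (conj z - l) ^ 3,
    PeriodPair.derivWeierstrassP, map_neg, conj_tsum]
  simp only [map_sub, map_div₀, map_pow, conj_ofNat]

lemma im_weierstrassP_eq_zero {z : ℂ} (hz : z.im = 0) : (℘[L] z).im = 0 := by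
  rw [← conj_eq_iff_im, ← weierstrassP_conj hL, conj_eq_iff_im.mpr hz]

lemma im_derivWeierstrassP_eq_zero {z : ℂ} (hz : z.im = 0) : (℘'[L] z).im = 0 := by
  rw [← conj_eq_iff_im, ← derivWeierstrassP_conj hL, conj_eq_iff_im.mpr hz]

end Conj

end LatticeSymmetry

section EisensteinIntegers

lemma tau_sq : tau ^ 2 = -1 - tau := by
  have h : (Real.sqrt 3 : ℂ) ^ 2 = 3 := by exact_mod_cast Real.sq_sqrt zero_le_three
  rw [tau]
  linear_combination (1 / 4 : ℂ) * I ^ 2 * h + (3 / 4 : ℂ) * I_sq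

lemma tau_cube : tau ^ 3 = 1 := by
  linear_combination (tau - 1) * tau_sq

lemma tau_im_ne_zero : tau.im ≠ 0 := by
  simp [tau]

lemma tau_ne_zero : tau ≠ 0 :=
  ne_of_apply_ne im tau_im_ne_zero

lemma tau_sub_one_ne_zero : tau - 1 ≠ 0 :=
  ne_of_apply_ne im (by simpa using tau_im_ne_zero)

lemma conj_tau : conj tau = -1 - tau := by
  simp only [tau, map_div₀, map_add, map_neg, map_one, map_mul, conj_ofReal, conj_I, map_ofNat]
  ring

lemma mem_Eis {x : ℂ} : x ∈ Eis ↔ ∃ m n : ℤ, m + n * tau = x := by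
  constructor
  · intro h
    induction h using Subring.closure_induction with
    | mem x hx => exact ⟨0, 1, by simpa using hx.symm⟩
    | zero => exact ⟨0, 0, by simp⟩
    | one => exact ⟨1, 0, by simp⟩
    | add x y _ _ hx hy =>
      obtain ⟨⟨a, b, rfl⟩, ⟨c, d, rfl⟩⟩ := And.intro hx hy
      exact ⟨a + c, b + d, by push_cast; ring⟩
    | neg x _ hx =>
      obtain ⟨a, b, rfl⟩ := hx
      exact ⟨-a, -b, by push_cast; ring⟩
    | mul x y _ _ hx hy =>
      obtain ⟨⟨a, b, rfl⟩, ⟨c, d, rfl⟩⟩ := And.intro hx hy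
      exact ⟨a * c - b * d, a * d + b * c - b * d, by
        push_cast; linear_combination (-(b : ℂ) * d) * tau_sq⟩
  · rintro ⟨m, n, rfl⟩
    exact add_mem (intCast_mem Eis m) (mul_mem (intCast_mem Eis n) (Subring.subset_closure rfl))

end EisensteinIntegers

/-- The basis `(ω, ω·τ)` of the lattice `L_ω = ω·ℤ[τ]`. It makes the theory of the `℘`-function of
a `PeriodPair` available for `wp ω`. -/
def eisPeriodPair {ω : ℝ} (hω : ω ≠ 0) : PeriodPair where
  ω₁ := ω
  ω₂ := ω * tau
  indep := by
    refine LinearIndependent.pair_iff.mpr fun s t h ↦ ?_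
    have him := congrArg im h
    simp only [real_smul, add_im, mul_im, ofReal_im, ofReal_re, mul_zero, zero_mul, add_zero,
      zero_im, zero_add, mul_eq_zero, hω, tau_im_ne_zero, or_self, or_false] at him
    subst him
    simpa [hω] using h

section HexagonalLattice

variable {ω : ℝ}

section NeZero

variable (hω : ω ≠ 0)

lemma mem_lattice_eisPeriodPair {x : ℂ} :
    x ∈ (eisPeriodPair hω).lattice ↔ ∃ m n : ℤ, (ω : ℂ) * (m + n * tau) = x := by
  have hcomb (m n : ℤ) : m * (eisPeriodPair hω).ω₁ + n * (eisPeriodPair hω).ω₂ =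
      ω * (m + n * tau) := by
    simp only [eisPeriodPair]
    ring
  simp only [PeriodPair.mem_lattice, hcomb]

lemma notMem_lattice_of_eq_mul {x : ℂ} (α β : ℚ) (hαβ : ¬(α.den = 1 ∧ β.den = 1))
    (hx : x = ω * (α + β * tau)) : x ∉ (eisPeriodPair hω).lattice := by
  have hcomb : x = α * (eisPeriodPair hω).ω₁ + β * (eisPeriodPair hω).ω₂ := by
    simp only [hx, eisPeriodPair]
    ring
  rwa [hcomb, PeriodPair.mul_ω₁_add_mul_ω₂_mem_lattice]

lemma inLattice_iff {x : ℂ} : inLattice ω x ↔ x ∈ (eisPeriodPair hω).lattice := by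
  rw [mem_lattice_eisPeriodPair]
  constructor
  · rintro ⟨⟨a, ha⟩, rfl⟩
    obtain ⟨m, n, h⟩ := mem_Eis.mp ha
    exact ⟨m, n, by rw [h]⟩
  · rintro ⟨m, n, h⟩
    exact ⟨⟨_, mem_Eis.mpr ⟨m, n, rfl⟩⟩, h.symm⟩

theorem wp_eq_weierstrassP : wp ω = ℘[eisPeriodPair hω] := by
  ext z
  set L := eisPeriodPair hω
  let incl : {w : ℂ // inLattice ω w ∧ w ≠ 0} → L.lattice :=
    fun a ↦ ⟨a, (inLattice_iff hω).mp a.2.1⟩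
  have hincl : Function.Injective incl := fun a b h ↦ Subtype.ext (Subtype.mk.inj h)
  have htsum : ∑' a : {w : ℂ // inLattice ω w ∧ w ≠ 0},
      (1 / (z - (a : ℂ)) ^ 2 - 1 / (a : ℂ) ^ 2) = L.weierstrassPExcept 0 z := by
    rw [PeriodPair.weierstrassPExcept, ← hincl.tsum_eq]
    · exact tsum_congr fun a ↦ (if_neg a.2.2).symm
    · intro l hl
      have hl0 : (l : ℂ) ≠ 0 := fun h ↦ hl (if_pos h)
      exact ⟨⟨l, (inLattice_iff hω).mpr l.2, hl0⟩, rfl⟩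
  rw [wp, htsum, ← L.weierstrassPExcept_add 0 z]
  simp [add_comm]

lemma tau_mul_mem_lattice_iff (l : ℂ) :
    tau * l ∈ (eisPeriodPair hω).lattice ↔ l ∈ (eisPeriodPair hω).lattice := by
  have hmul {x : ℂ} (hx : x ∈ (eisPeriodPair hω).lattice) :
      tau * x ∈ (eisPeriodPair hω).lattice := by
    rw [mem_lattice_eisPeriodPair] at hx ⊢
    obtain ⟨m, n, rfl⟩ := hx
    exact ⟨-n, m - n, by push_cast; linear_combination (-(ω : ℂ) * n) * tau_sq⟩
  refine ⟨fun h ↦ ?_, hmul⟩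
  convert hmul (hmul h) using 1
  linear_combination -l * tau_cube

lemma conj_mem_lattice_iff (l : ℂ) :
    conj l ∈ (eisPeriodPair hω).lattice ↔ l ∈ (eisPeriodPair hω).lattice := by
  have hconj {x : ℂ} (hx : x ∈ (eisPeriodPair hω).lattice) :
      conj x ∈ (eisPeriodPair hω).lattice := by
    rw [mem_lattice_eisPeriodPair] at hx ⊢
    obtain ⟨m, n, rfl⟩ := hx
    refine ⟨m - n, -n, ?_⟩
    simp only [map_mul, map_add, conj_tau, conj_ofReal, map_intCast]
    push_cast
    ring
  exact ⟨fun h ↦ by simpa using hconj h, hconj⟩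

lemma weierstrassP_tau_mul (z : ℂ) :
    ℘[eisPeriodPair hω] (tau * z) = tau * ℘[eisPeriodPair hω] z := by
  have hinv : (tau ^ 2)⁻¹ = tau := inv_eq_of_mul_eq_one_left (by rw [← pow_succ', tau_cube])
  rw [weierstrassP_mul tau_ne_zero (tau_mul_mem_lattice_iff hω), hinv]

lemma derivWeierstrassP_tau_mul (z : ℂ) :
    ℘'[eisPeriodPair hω] (tau * z) = ℘'[eisPeriodPair hω] z := by
  rw [derivWeierstrassP_mul tau_ne_zero (tau_mul_mem_lattice_iff hω), tau_cube, inv_one, one_mul]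

lemma g₂_eisPeriodPair : (eisPeriodPair hω).g₂ = 0 := by
  have hG := G_eq_inv_pow_mul_G tau_ne_zero (tau_mul_mem_lattice_iff hω) 4
  rw [pow_succ, tau_cube, one_mul, eq_inv_mul_iff_mul_eq₀ tau_ne_zero] at hG
  have hG4 : (eisPeriodPair hω).G 4 = 0 :=
    (mul_eq_zero.mp (by linear_combination hG)).resolve_left tau_sub_one_ne_zero
  rw [PeriodPair.g₂, hG4, mul_zero]

lemma derivWeierstrassP_sq_eisPeriodPair {z : ℂ} (hz : z ∉ (eisPeriodPair hω).lattice) :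
    ℘'[eisPeriodPair hω] z ^ 2 = 4 * ℘[eisPeriodPair hω] z ^ 3 - (eisPeriodPair hω).g₃ := by
  rw [PeriodPair.derivWeierstrassP_sq _ z hz, g₂_eisPeriodPair, zero_mul, sub_zero]

lemma weierstrassP_tau_sub_one_div_three :
    ℘[eisPeriodPair hω] (ω * (tau - 1) / 3) = 0 := by
  set u : ℂ := ω * (tau - 1) / 3 with hu
  have hmem : -(ω * tau) ∈ (eisPeriodPair hω).lattice :=
    (mem_lattice_eisPeriodPair hω).mpr ⟨0, -1, by push_cast; ring⟩
  have hfix : tau * ℘[eisPeriodPair hω] u = ℘[eisPeriodPair hω] u := by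
    rw [← weierstrassP_tau_mul,
      ← (eisPeriodPair hω).periodic_weierstrassP ⟨_, hmem⟩ u]
    congr 1
    rw [hu]
    linear_combination (ω / 3 : ℂ) * tau_sq
  exact (mul_eq_zero.mp (by linear_combination hfix)).resolve_left tau_sub_one_ne_zero

lemma ofReal_div_three_notMem_lattice : (ω / 3 : ℂ) ∉ (eisPeriodPair hω).lattice :=
  notMem_lattice_of_eq_mul hω (1 / 3) 0 (by norm_num) (by push_cast; ring)

lemma ofReal_div_six_notMem_lattice : (ω / 6 : ℂ) ∉ (eisPeriodPair hω).lattice :=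
  notMem_lattice_of_eq_mul hω (1 / 6) 0 (by norm_num) (by push_cast; ring)

theorem derivWeierstrassP_div_three_sq :
    ℘'[eisPeriodPair hω] (ω / 3) ^ 2 = 3 * (eisPeriodPair hω).g₃ := by
  set u : ℂ := ω * (tau - 1) / 3
  have hu_notMem : u ∉ (eisPeriodPair hω).lattice :=
    notMem_lattice_of_eq_mul hω (-1 / 3) (1 / 3) (by norm_num) (by push_cast; ring)
  have h3u : 3 * u ∈ (eisPeriodPair hω).lattice :=
    (mem_lattice_eisPeriodPair hω).mpr ⟨-1, 1, by push_cast; ring⟩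
  have htranslate : (ω / 3 : ℂ) + u = tau * (ω / 3) := by ring
  have hzero := weierstrassP_tau_sub_one_div_three hω
  have hthird := ofReal_div_three_notMem_lattice hω
  have h := derivWeierstrassP_translate_mul_eq (g₂_eisPeriodPair hω) hu_notMem h3u hzero hthird
    (by rwa [htranslate, tau_mul_mem_lattice_iff])
  rw [htranslate, derivWeierstrassP_tau_mul] at h
  linear_combination h + derivWeierstrassP_sq_of_weierstrassP_eq_zero hu_notMem hzero

theorem weierstrassP_div_three_pow_three :
    ℘[eisPeriodPair hω] (ω / 3) ^ 3 = (eisPeriodPair hω).g₃ := by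
  have hode := derivWeierstrassP_sq_eisPeriodPair hω (ofReal_div_three_notMem_lattice hω)
  linear_combination (derivWeierstrassP_div_three_sq hω - hode) / 4

lemma weierstrassP_div_three_ne_zero : ℘[eisPeriodPair hω] (ω / 3) ≠ 0 := by
  refine (pow_ne_zero_iff three_ne_zero).mp ?_
  rw [weierstrassP_div_three_pow_three]
  exact g₃_ne_zero_of_g₂_eq_zero (g₂_eisPeriodPair hω)

lemma ofReal_re_g₃_eisPeriodPair : ((eisPeriodPair hω).g₃.re : ℂ) = (eisPeriodPair hω).g₃ := by
  have him := im_weierstrassP_eq_zero (conj_mem_lattice_iff hω) (z := ω / 3) (by simp)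
  rw [← weierstrassP_div_three_pow_three]
  lift ℘[eisPeriodPair hω] (ω / 3) to ℝ using him with k
  norm_cast

lemma ofReal_div_two_notMem_lattice : (ω / 2 : ℂ) ∉ (eisPeriodPair hω).lattice :=
  (eisPeriodPair hω).ω₁_div_two_notMem_lattice

lemma two_mul_ofReal_div_two_mem_lattice : 2 * (ω / 2 : ℂ) ∈ (eisPeriodPair hω).lattice := by
  simpa [mul_div_cancel₀] using! (eisPeriodPair hω).ω₁_mem_lattice

theorem weierstrassP_add_half_mul_eq {z : ℂ} (hz : z ∉ (eisPeriodPair hω).lattice)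
    (hz' : z + ω / 2 ∉ (eisPeriodPair hω).lattice) :
    (℘[eisPeriodPair hω] (z + ω / 2) - ℘[eisPeriodPair hω] (ω / 2)) *
      (℘[eisPeriodPair hω] z - ℘[eisPeriodPair hω] (ω / 2)) =
        3 * ℘[eisPeriodPair hω] (ω / 2) ^ 2 := by
  have hhalf := ofReal_div_two_notMem_lattice hω
  obtain ⟨C, -, hC⟩ := exists_weierstrassP_translate_mul_eq hhalf
    (two_mul_ofReal_div_two_mem_lattice hω)
  have hshift : tau * (ω / 2) + ω / 2 = -(tau * (tau * (ω / 2))) := by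
    linear_combination (ω / 2 : ℂ) * tau_sq
  have hCτ := hC (tau * (ω / 2)) (by rwa [tau_mul_mem_lattice_iff])
    (by rwa [hshift, neg_mem_iff, tau_mul_mem_lattice_iff, tau_mul_mem_lattice_iff])
  rw [hshift, PeriodPair.weierstrassP_neg, weierstrassP_tau_mul, weierstrassP_tau_mul] at hCτ
  rw [hC z hz hz', ← hCτ]
  linear_combination ℘[eisPeriodPair hω] (ω / 2) ^ 2 * (tau_cube - tau_sq)

lemma weierstrassP_half_eq {a : ℝ} (ha : a ^ 3 = 2) :
    ℘[eisPeriodPair hω] (ω / 2) = ℘[eisPeriodPair hω] (ω / 3) * a / 2 := by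
  have hhalf := four_mul_weierstrassP_pow_three_of_two_mul_mem (g₂_eisPeriodPair hω)
    (ofReal_div_two_notMem_lattice hω) (two_mul_ofReal_div_two_mem_lattice hω)
  have hthird := weierstrassP_div_three_pow_three hω
  have him {z : ℂ} := im_weierstrassP_eq_zero (z := z) (conj_mem_lattice_iff hω)
  lift ℘[eisPeriodPair hω] (ω / 2) to ℝ using him (by simp) with e
  lift ℘[eisPeriodPair hω] (ω / 3) to ℝ using him (by simp) with k
  norm_cast
  refine (by decide : Odd 3).pow_injective ?_
  have hcubes := hhalf.trans hthird.symm
  norm_cast at hcubes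
  linear_combination hcubes / 4 - k ^ 3 / 8 * ha

theorem weierstrassP_div_six {a : ℝ} (ha : a ^ 3 = 2) :
    ℘[eisPeriodPair hω] (ω / 6) = ℘[eisPeriodPair hω] (ω / 3) * (1 + a + a ^ 2) := by
  have hhalf := weierstrassP_half_eq hω ha
  have hsum : (ω / 6 : ℂ) + ω / 2 = -(ω / 3) + ω := by ring
  have hω_mem : (ω : ℂ) ∈ (eisPeriodPair hω).lattice := (eisPeriodPair hω).ω₁_mem_lattice
  have hthird : ℘[eisPeriodPair hω] (ω / 6 + ω / 2) = ℘[eisPeriodPair hω] (ω / 3) := by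
    rw [hsum, (eisPeriodPair hω).periodic_weierstrassP ⟨_, hω_mem⟩, PeriodPair.weierstrassP_neg]
  have hsum_notMem : (ω / 6 : ℂ) + ω / 2 ∉ (eisPeriodPair hω).lattice :=
    notMem_lattice_of_eq_mul hω (2 / 3) 0 (by norm_num) (by push_cast; ring)
  have hmul := weierstrassP_add_half_mul_eq hω (ofReal_div_six_notMem_lattice hω) hsum_notMem
  rw [hthird, hhalf] at hmul
  have ha' : (a : ℂ) ^ 3 = 2 := by exact_mod_cast ha
  have ha2 : (2 - a : ℂ) ≠ 0 := by
    intro h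
    rw [← sub_eq_zero.mp h] at ha'
    norm_num at ha'
  refine mul_left_cancel₀ (mul_ne_zero (weierstrassP_div_three_ne_zero hω) ha2) ?_
  linear_combination 2 * hmul + ℘[eisPeriodPair hω] (ω / 3) ^ 2 * ha'

theorem derivWeierstrassP_div_six_sq {a : ℝ} (ha : a ^ 3 = 2) :
    ℘'[eisPeriodPair hω] (ω / 6) ^ 2 =
      3 * (eisPeriodPair hω).g₃ * (3 + 2 * a + 2 * a ^ 2) ^ 2 := by
  have ha' : (a : ℂ) ^ 3 = 2 := by exact_mod_cast ha
  have hcube : ℘[eisPeriodPair hω] (ω / 6) ^ 3 =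
      (eisPeriodPair hω).g₃ * (1 + a + a ^ 2) ^ 3 := by
    rw [weierstrassP_div_six hω ha, mul_pow, weierstrassP_div_three_pow_three]
  rw [derivWeierstrassP_sq_eisPeriodPair hω (ofReal_div_six_notMem_lattice hω), hcube]
  linear_combination
    (eisPeriodPair hω).g₃ * (4 * a ^ 3 + 12 * a ^ 2 + 12 * a + 12) * ha'

end NeZero

section Pos

variable (hω : 0 < ω)
include hω

lemma ofReal_notMem_lattice {t : ℝ} (h0 : 0 < t) (ht : t < ω) :
    (t : ℂ) ∉ (eisPeriodPair hω.ne').lattice := by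
  rw [mem_lattice_eisPeriodPair]
  rintro ⟨m, n, h⟩
  have hn : n = 0 := by
    simpa [hω.ne', tau_im_ne_zero] using congrArg im h
  subst hn
  have hm : ω * m = t := by
    simp only [Int.cast_zero, zero_mul, add_zero] at h
    exact_mod_cast h
  have hm_pos : (0 : ℝ) < m := pos_of_mul_pos_right (hm ▸ h0) hω.le
  have hm_lt : (m : ℝ) < 1 := by nlinarith
  norm_cast at hm_pos hm_lt
  lia

lemma derivWeierstrassP_ofReal_ne_zero {t : ℝ} (h0 : 0 < t) (ht : t < ω / 2) :
    ℘'[eisPeriodPair hω.ne'] t ≠ 0 := by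
  intro hderiv
  have ht_notMem := ofReal_notMem_lattice hω h0 (by linarith)
  have hsum_notMem : (t : ℂ) + ω / 2 ∉ (eisPeriodPair hω.ne').lattice := by
    exact_mod_cast ofReal_notMem_lattice hω (t := t + ω / 2) (by linarith) (by linarith)
  have hhalf_notMem := ofReal_div_two_notMem_lattice hω.ne'
  have h2_mem := two_mul_ofReal_div_two_mem_lattice hω.ne'
  have hne := weierstrassP_ne_of_two_mul_mem hhalf_notMem h2_mem ht_notMem hsum_notMem
  have hcubes : ℘[eisPeriodPair hω.ne'] t ^ 3 = ℘[eisPeriodPair hω.ne'] (ω / 2) ^ 3 := by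
    have hode := derivWeierstrassP_sq_eisPeriodPair hω.ne' ht_notMem
    rw [hderiv] at hode
    linear_combination (-hode - four_mul_weierstrassP_pow_three_of_two_mul_mem
      (g₂_eisPeriodPair hω.ne') hhalf_notMem h2_mem) / 4
  have him {z : ℂ} := im_weierstrassP_eq_zero (z := z) (conj_mem_lattice_iff hω.ne')
  lift ℘[eisPeriodPair hω.ne'] t to ℝ using him (ofReal_im t) with x
  lift ℘[eisPeriodPair hω.ne'] (ω / 2) to ℝ using him (by simp) with e
  norm_cast at hne hcubes
  exact hne ((by decide : Odd 3).pow_injective hcubes)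

lemma hasDerivAt_re_weierstrassP {t : ℝ} (h0 : 0 < t) (ht : t < ω) :
    HasDerivAt (fun t : ℝ ↦ (℘[eisPeriodPair hω.ne'] t).re) (℘'[eisPeriodPair hω.ne'] t).re t := by
  rw [← PeriodPair.deriv_weierstrassP]
  exact ((eisPeriodPair hω.ne').analyticOnNhd_weierstrassP _
    (ofReal_notMem_lattice hω h0 ht)).differentiableAt.hasDerivAt.real_of_complex

lemma re_g₃_pos : 0 < (eisPeriodPair hω.ne').g₃.re := by
  have hsq := derivWeierstrassP_div_three_sq hω.ne'
  have him {z : ℂ} := im_derivWeierstrassP_eq_zero (z := z) (conj_mem_lattice_iff hω.ne')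
  have hne : ℘'[eisPeriodPair hω.ne'] (ω / 3) ≠ 0 := by
    exact_mod_cast derivWeierstrassP_ofReal_ne_zero hω (t := ω / 3) (by linarith) (by linarith)
  lift ℘'[eisPeriodPair hω.ne'] (ω / 3) to ℝ using him (by simp) with d
  have hre : d ^ 2 = 3 * (eisPeriodPair hω.ne').g₃.re := by
    simpa [← ofReal_pow] using congrArg re hsq
  have hd : 0 < d ^ 2 := sq_pos_of_ne_zero (by exact_mod_cast hne)
  linarith

lemma re_derivWeierstrassP_neg {x y : ℝ} (hx : 0 < x) (hxy : x < y) (hy : y < ω / 2)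
    (hlt : (℘[eisPeriodPair hω.ne'] y).re < (℘[eisPeriodPair hω.ne'] x).re) :
    (℘'[eisPeriodPair hω.ne'] x).re < 0 := by
  have hderiv (t : ℝ) (ht : t ∈ Set.Ioo 0 (ω / 2)) :=
    hasDerivAt_re_weierstrassP hω ht.1 (by linarith [ht.2])
  refine hasDerivAt_neg_of_forall_ne_zero (convex_Ioo 0 (ω / 2)) hderiv (fun t ht hre ↦ ?_)
    ⟨hx, hxy.trans hy⟩ ⟨hx.trans hxy, hy⟩ hxy hlt
  have him := im_derivWeierstrassP_eq_zero (conj_mem_lattice_iff hω.ne') (ofReal_im t)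
  exact derivWeierstrassP_ofReal_ne_zero hω ht.1 ht.2 (Complex.ext hre him)

lemma re_weierstrassP_div_three_lt {a : ℝ} (ha : a ^ 3 = 2) :
    (℘[eisPeriodPair hω.ne'] (ω / 3)).re < (℘[eisPeriodPair hω.ne'] (ω / 6)).re := by
  have ha_pos : 0 < a := (by decide : Odd 3).pow_pos_iff.mp (ha ▸ two_pos)
  have hcube := congrArg re (weierstrassP_div_three_pow_three hω.ne')
  have him {z : ℂ} := im_weierstrassP_eq_zero (z := z) (conj_mem_lattice_iff hω.ne')
  rw [weierstrassP_div_six hω.ne' ha]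
  lift ℘[eisPeriodPair hω.ne'] (ω / 3) to ℝ using him (by simp) with k
  norm_cast at hcube ⊢
  have hk : 0 < k := (by decide : Odd 3).pow_pos_iff.mp (hcube ▸ re_g₃_pos hω)
  exact lt_mul_of_one_lt_right hk (by nlinarith [sq_nonneg a])

theorem derivWeierstrassP_div_six {a : ℝ} (ha : a ^ 3 = 2) :
    ℘'[eisPeriodPair hω.ne'] (ω / 6) =
      -(√(3 * (eisPeriodPair hω.ne').g₃.re) : ℂ) * (3 + 2 * a + 2 * a ^ 2) := by
  have ha_pos : 0 < a := (by decide : Odd 3).pow_pos_iff.mp (ha ▸ two_pos)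
  have hneg : (℘'[eisPeriodPair hω.ne'] (ω / 6)).re < 0 := by
    exact_mod_cast re_derivWeierstrassP_neg hω (x := ω / 6) (y := ω / 3) (by linarith)
      (by linarith) (by linarith) (by exact_mod_cast re_weierstrassP_div_three_lt hω ha)
  have hsq := derivWeierstrassP_div_six_sq hω.ne' ha
  have him {z : ℂ} := im_derivWeierstrassP_eq_zero (z := z) (conj_mem_lattice_iff hω.ne')
  rw [← ofReal_re_g₃_eisPeriodPair] at hsq
  lift ℘'[eisPeriodPair hω.ne'] (ω / 6) to ℝ using him (by simp) with d
  norm_cast at hneg hsq ⊢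
  set s := √(3 * (eisPeriodPair hω.ne').g₃.re)
  have hs : s ^ 2 = 3 * (eisPeriodPair hω.ne').g₃.re :=
    Real.sq_sqrt (by linarith [re_g₃_pos hω])
  have habs : -d = s * (3 + 2 * a + 2 * a ^ 2) := by
    refine (sq_eq_sq₀ (by linarith) (by positivity)).mp ?_
    rw [neg_sq, mul_pow, hs, hsq]
  linear_combination -habs

end Pos

end HexagonalLattice

section CubeRoots

lemma two_rpow_one_div_three_pow_three : ((2 : ℝ) ^ ((1 : ℝ) / 3)) ^ 3 = 2 := by
  rw [one_div]
  exact Real.rpow_inv_natCast_pow zero_le_two three_ne_zero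

lemma cbrt4_eq_cbrt2_sq : cbrt4 = cbrt2 ^ 2 := by
  rw [cbrt4, cbrt2, ← ofReal_pow, Real.rpow_pow_comm zero_le_two]
  norm_num

end CubeRoots

lemma g₃_eq_one_of_ode {ω : ℝ} (hω : ω ≠ 0)
    (hODE : ∀ z : ℂ, ¬inLattice ω z → deriv (wp ω) z ^ 2 = 4 * wp ω z ^ 3 - 1) :
    (eisPeriodPair hω).g₃ = 1 := by
  have hthird := ofReal_div_three_notMem_lattice hω
  have hode := hODE (ω / 3) ((inLattice_iff hω).not.mpr hthird)
  rw [wp_eq_weierstrassP hω, PeriodPair.deriv_weierstrassP] at hode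
  linear_combination derivWeierstrassP_sq_eisPeriodPair hω hthird - hode

theorem wp_deriv_value_at_one_sixth_general {ω : ℝ} (hω : 0 < ω) :
    deriv (wp ω) (ω / 6) =
      -(√(3 * (eisPeriodPair hω.ne').g₃.re) : ℂ) * (3 + 2 * cbrt2 + 2 * cbrt4) := by
  rw [wp_eq_weierstrassP hω.ne', PeriodPair.deriv_weierstrassP, cbrt4_eq_cbrt2_sq, cbrt2]
  exact derivWeierstrassP_div_six hω two_rpow_one_div_three_pow_three

/-- From [Qiu], (2.12): `℘′(ω/6) = −√3·(3 + 2∛2 + 2∛4)`.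
Here `ω > 0` is pinned down by the differential equation `℘′² = 4℘³ − 1` for the
lattice `L_ω = ω·ℤ[τ]` (equivalently, the lattice invariants are `g₂ = 0`, `g₃ = 1`). -/
theorem wp_deriv_value_at_one_sixth
    (ω : ℝ) (hω : 0 < ω)
    (hODE : ∀ z : ℂ, ¬ inLattice ω z → deriv (wp ω) z ^ 2 = 4 * wp ω z ^ 3 - 1) :
    deriv (wp ω) ((ω : ℂ) / 6) = -(Real.sqrt 3 : ℂ) * (3 + 2 * cbrt2 + 2 * cbrt4) := by
  rw [wp_deriv_value_at_one_sixth_general hω, g₃_eq_one_of_ode hω.ne' hODE, one_re, mul_one]
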